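/- For every positive integer N, with ε = 1/N, the infimum of ‖D²u‖_{ℓ²_ε} / ‖Du‖_{ℓ²_ε} over all u ∈ U with u ≠ 0 equals 2 sin(πε/2)/ε. -/

import Mathlib

/-!
The lower bound is the discrete Wirtinger inequality. If `v` is `2N`-periodic with zero mean, its
discrete Fourier transform on `ℤ/2Nℤ` vanishes at the frequency `0`, and differencing multiplies
the coefficient at frequency `k` by `1 - exp (-πik/N)`, whose modulus `2 |sin (πk/2N)|` is at least
`2 sin (π/2N)` for `k ≠ 0`. Parseval's identity (`parseval`) then gives
`4 sin² (π/2N) ∑ v_ℓ² ≤ ∑ (v_ℓ - v_{ℓ-1})²` (`wirtinger`). Applied to `u` itself this shows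
`Du ≠ 0` for nonzero `u ∈ U`; applied to `Du` it bounds the quotient from below.

The bound is attained at `u_ℓ = cos (πℓ/N)`: `Du` is an eigenvector of the second difference with
eigenvalue `-4 sin² (π/2N)`, and summation by parts (`sum_sq_diff_of_eigen`) turns this into an
equality of norms.
-/

open Finset Real

noncomputable section

/-- scaled lattice spacing ε = 1/N -/
def eps (N : ℕ) : ℝ := 1 / N

/-- the index range ℓ = -N+1, …, N -/
def rng (N : ℕ) : Finset ℤ := Finset.Icc (-(N : ℤ) + 1) N

/-- 2N-periodicity of a sequence -/
def Periodic2N (N : ℕ) (u : ℤ → ℝ) : Prop := ∀ ℓ : ℤ, u (ℓ + 2 * (N : ℤ)) = u ℓ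

/-- the space 𝒰 of 2N-periodic zero-mean displacements -/
def memU (N : ℕ) (u : ℤ → ℝ) : Prop :=
  Periodic2N N u ∧ ∑ ℓ ∈ rng N, u ℓ = 0

/-- discrete differentiation operator: (Dv)_ℓ = (v_ℓ - v_{ℓ-1})/ε -/
def Dv (N : ℕ) (v : ℤ → ℝ) : ℤ → ℝ := fun ℓ => (v ℓ - v (ℓ - 1)) / eps N

/-- squared discrete ℓ²_ε norm -/
def nsq (N : ℕ) (v : ℤ → ℝ) : ℝ := eps N * ∑ ℓ ∈ rng N, v ℓ ^ 2

/-- discrete ℓ²_ε norm -/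
def nrm (N : ℕ) (v : ℤ → ℝ) : ℝ := Real.sqrt (nsq N v)

/-- squared discrete ℓ²_ε seminorm over an index set S -/
def nsqS (N : ℕ) (S : Finset ℤ) (v : ℤ → ℝ) : ℝ := eps N * ∑ ℓ ∈ S, v ℓ ^ 2

/-- discrete ℓ²_ε seminorm over an index set S -/
def nrmS (N : ℕ) (S : Finset ℤ) (v : ℤ → ℝ) : ℝ := Real.sqrt (nsqS N S v)

/-- discrete ℓ^∞ norm over an index set S -/
def linf (S : Finset ℤ) (v : ℤ → ℝ) : ℝ := sSup ((fun ℓ => |v ℓ|) '' (S : Set ℤ))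

/-- the interfacial index set 𝒜_qnl(k) -/
def Aqnl (K : ℤ) (k : ℕ) : Finset ℤ := Finset.Icc (-K - (k : ℤ) + 1) (K + 1)

/-- the continuum index set 𝒞_qnl(k) -/
def Cqnl (N : ℕ) (K : ℤ) (k : ℕ) : Finset ℤ :=
  Finset.Icc (-(N : ℤ) + 1) (-K - (k : ℤ)) ∪ Finset.Icc (K + 2) (N : ℤ)

/-- the interface ℐ_qnl(k) between continuum and atomistic regions -/
def Iqnl (K : ℤ) (k : ℕ) : Finset ℤ :=
  Finset.Icc (-K - (k : ℤ) + 1) (-K - 1) ∪ Finset.Icc (K + 2) (K + (k : ℤ))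

/-- the extended continuum region 𝒞̃_qnl(k) = 𝒞_qnl(k) ∪ ℐ_qnl(k) -/
def Ctil (N : ℕ) (K : ℤ) (k : ℕ) : Finset ℤ := Cqnl N K k ∪ Iqnl K k

/-- A `2N`-periodic sequence factors through `ℤ/2Nℤ`. -/
lemma exists_lift {N : ℕ} {v : ℤ → ℝ} (hv : Periodic2N N v) :
    ∃ F : ZMod (2 * N) → ℝ, ∀ ℓ : ℤ, v ℓ = F (ℓ : ZMod (2 * N)) := by
  refine ⟨fun k => v (k.cast : ℤ), fun ℓ => ?_⟩
  have hp : Function.Periodic v (2 * (N : ℤ)) := hv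
  simp only [ZMod.coe_intCast]
  push_cast
  rw [Int.emod_def, mul_comm]
  simpa using (hp.sub_zsmul_eq (x := ℓ) (ℓ / (2 * (N : ℤ)))).symm

/-- `-N+1, …, N` is a system of representatives of `ℤ/2Nℤ`. -/
lemma sum_rng_cast {N : ℕ} [NeZero (2 * N)] (G : ZMod (2 * N) → ℝ) :
    ∑ ℓ ∈ rng N, G (ℓ : ZMod (2 * N)) = ∑ k, G k := by
  have hinj : Set.InjOn (fun ℓ : ℤ => (ℓ : ZMod (2 * N))) (rng N : Set ℤ) := by
    intro a ha b hb hab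
    simp only [rng, Finset.coe_Icc, Set.mem_Icc] at ha hb
    have h := (ZMod.intCast_eq_intCast_iff_dvd_sub a b (2 * N)).1 hab
    have h0 : b - a = 0 := by
      apply Int.eq_zero_of_abs_lt_dvd h
      rw [abs_lt]
      push_cast
      constructor <;> omega
    omega
  have himg : (rng N).image (fun ℓ : ℤ => (ℓ : ZMod (2 * N))) = Finset.univ := by
    apply Finset.eq_univ_of_card
    rw [Finset.card_image_of_injOn hinj, ZMod.card, rng, Int.card_Icc]
    omega
  rw [← himg, Finset.sum_image hinj]

lemma parseval {M : ℕ} [NeZero M] (f : ZMod M → ℂ) :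
    ∑ k, ‖ZMod.dft f k‖ ^ 2 = M * ∑ j, ‖f j‖ ^ 2 := by
  have key : ∑ k, (starRingEnd ℂ) (ZMod.dft f k) * ZMod.dft f k
      = M * ∑ j, (starRingEnd ℂ) (f j) * f j := by
    have h1 : ∀ k, (starRingEnd ℂ) (ZMod.dft f k) * ZMod.dft f k
        = ∑ j, (starRingEnd ℂ) (f j) * (ZMod.stdAddChar (-(k * -j)) • ZMod.dft f k) := by
      intro k
      conv_lhs => rw [ZMod.dft_apply f k, map_sum, Finset.sum_mul]
      refine Finset.sum_congr rfl fun j _ => ?_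
      rw [← ZMod.dft_apply, smul_eq_mul, smul_eq_mul, map_mul, ← AddChar.map_neg_eq_conj]
      have : - -(j * k) = -(k * -j) := by ring
      rw [this]
      ring
    rw [Finset.sum_congr rfl fun k _ => h1 k, Finset.sum_comm, Finset.mul_sum]
    refine Finset.sum_congr rfl fun j _ => ?_
    -- the sum over frequencies is the double transform of `f` at `-j`
    rw [← Finset.mul_sum, ← ZMod.dft_apply, ZMod.dft_dft]
    simp only [neg_neg, smul_eq_mul]
    ring
  simp only [Complex.conj_mul'] at key
  exact_mod_cast key

lemma sin_bound {M m : ℕ} (h1 : 1 ≤ m) (h2 : m + 1 ≤ M) :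
    Real.sin (π / M) ≤ Real.sin (π * m / M) := by
  have hM : (0 : ℝ) < M := by exact_mod_cast (by omega : 0 < M)
  have hpi := Real.pi_pos
  have a1 : (1 : ℝ) ≤ m := by exact_mod_cast h1
  have a2 : (m : ℝ) + 1 ≤ M := by exact_mod_cast h2
  have b0 : 0 < π / M := by positivity
  have b1 : π / M ≤ π * m / M := by
    gcongr
    nlinarith
  have b2 : π / M ≤ π - π * m / M := by
    rw [le_sub_iff_add_le, ← add_div, div_le_iff₀ hM]
    nlinarith
  -- reflect `x ↦ π - x` when the argument exceeds `π / 2`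
  rcases le_total (π * m / M) (π / 2) with h | h
  · exact Real.sin_le_sin_of_le_of_le_pi_div_two (by linarith) h b1
  · rw [← Real.sin_pi_sub (π * m / M)]
    exact Real.sin_le_sin_of_le_of_le_pi_div_two (by linarith) (by linarith) b2

lemma char_bound {M : ℕ} [NeZero M] {k : ZMod M} (hk : k ≠ 0) :
    2 * Real.sin (π / M) ≤ ‖ZMod.stdAddChar k - 1‖ := by
  have e : (ZMod.stdAddChar k : ℂ) = Complex.exp (Complex.I * ((2 * π * k.val / M : ℝ) : ℂ)) := by
    rw [ZMod.stdAddChar_apply, ZMod.toCircle_apply]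
    congr 1
    push_cast
    ring
  rw [e, Complex.norm_exp_I_mul_ofReal_sub_one, Real.norm_eq_abs]
  refine le_trans ?_ (le_abs_self _)
  have h1 : 1 ≤ k.val := Nat.one_le_iff_ne_zero.2 ((ZMod.val_ne_zero k).2 hk)
  have h := sin_bound h1 (ZMod.val_lt k)
  have : 2 * π * k.val / M / 2 = π * k.val / M := by ring
  rw [this]
  linarith

lemma dft_diff {M : ℕ} [NeZero M] (f : ZMod M → ℂ) (k : ZMod M) :
    ZMod.dft (fun j => f j - f (j - 1)) k = (1 - ZMod.stdAddChar (-k)) * ZMod.dft f k := by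
  have hs : ∑ j, ZMod.stdAddChar (-(j * k)) * f (j - 1)
      = ZMod.stdAddChar (-k) * ∑ j, ZMod.stdAddChar (-(j * k)) * f j := by
    rw [← Equiv.sum_comp (Equiv.addRight (1 : ZMod M)), Finset.mul_sum]
    refine Finset.sum_congr rfl fun j _ => ?_
    rw [Equiv.coe_addRight, add_sub_cancel_right, ← mul_assoc, ← AddChar.map_add_eq_mul]
    congr 2
    ring
  simp only [ZMod.dft_apply, smul_eq_mul, mul_sub, Finset.sum_sub_distrib, hs]
  ring

lemma sin_pos_aux {M : ℕ} (hM : 2 ≤ M) : 0 < Real.sin (π / M) := by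
  have : (2 : ℝ) ≤ M := by exact_mod_cast hM
  apply Real.sin_pos_of_pos_of_lt_pi
  · have := Real.pi_pos
    positivity
  · rw [div_lt_iff₀ (by linarith)]
    nlinarith [Real.pi_pos]

/-- The discrete Wirtinger inequality on `ℤ/Mℤ`. -/
lemma wirtinger_zmod {M : ℕ} [NeZero M] (hM : 2 ≤ M) (F : ZMod M → ℝ) (h0 : ∑ k, F k = 0) :
    (2 * Real.sin (π / M)) ^ 2 * ∑ k, F k ^ 2 ≤ ∑ k, (F k - F (k - 1)) ^ 2 := by
  have hMp : (0 : ℝ) < M := by exact_mod_cast (by omega : 0 < M)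
  set f : ZMod M → ℂ := fun k => (F k : ℂ) with hf
  have p1 := parseval f
  have p2 := parseval (fun j => f j - f (j - 1))
  have n1 : ∀ j, ‖f j‖ ^ 2 = F j ^ 2 := fun j => by simp [hf]
  have n2 : ∀ j, ‖f j - f (j - 1)‖ ^ 2 = (F j - F (j - 1)) ^ 2 := fun j => by
    rw [hf, ← Complex.ofReal_sub, Complex.norm_real, Real.norm_eq_abs, sq_abs]
  simp only [n1] at p1
  simp only [n2, dft_diff] at p2
  have hz : ZMod.dft f 0 = 0 := by
    rw [ZMod.dft_apply_zero]
    simp only [hf]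
    exact_mod_cast h0
  have hle : (2 * Real.sin (π / M)) ^ 2 * ∑ k, ‖ZMod.dft f k‖ ^ 2
      ≤ ∑ k, ‖(1 - ZMod.stdAddChar (-k)) * ZMod.dft f k‖ ^ 2 := by
    rw [Finset.mul_sum]
    refine Finset.sum_le_sum fun k _ => ?_
    by_cases hk : k = 0
    · simp [hk, hz]
    · rw [norm_mul, mul_pow ‖_‖, norm_sub_rev]
      have h1 := char_bound (neg_ne_zero.2 hk)
      have h2 := (sin_pos_aux hM).le
      exact mul_le_mul_of_nonneg_right (pow_le_pow_left₀ (by positivity) h1 2) (sq_nonneg _)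
  rw [p1, p2] at hle
  refine le_of_mul_le_mul_left ?_ hMp
  linarith

lemma sin_arg (N : ℕ) : π * eps N / 2 = π / ((2 * N : ℕ) : ℝ) := by
  unfold eps
  push_cast
  ring

lemma wirtinger {N : ℕ} (hN : 0 < N) {v : ℤ → ℝ} (hv : memU N v) :
    (2 * Real.sin (π * eps N / 2)) ^ 2 * ∑ ℓ ∈ rng N, v ℓ ^ 2
      ≤ ∑ ℓ ∈ rng N, (v ℓ - v (ℓ - 1)) ^ 2 := by
  have : NeZero (2 * N) := ⟨by omega⟩
  obtain ⟨hp, h0⟩ := hv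
  obtain ⟨F, hF⟩ := exists_lift hp
  simp only [hF, Int.cast_sub, Int.cast_one] at h0 ⊢
  rw [sum_rng_cast F] at h0
  rw [sum_rng_cast (fun k => F k ^ 2), sum_rng_cast (fun k => (F k - F (k - 1)) ^ 2), sin_arg]
  exact wirtinger_zmod (by omega) F h0

/-- Summation by parts for a periodic eigenvector of the second difference. -/
lemma sum_sq_diff_of_eigen {N : ℕ} (hN : 0 < N) {v : ℤ → ℝ} (hp : Periodic2N N v) {c : ℝ}
    (hc : ∀ ℓ, v (ℓ + 1) - 2 * v ℓ + v (ℓ - 1) = -c * v ℓ) :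
    ∑ ℓ ∈ rng N, (v ℓ - v (ℓ - 1)) ^ 2 = c * ∑ ℓ ∈ rng N, v ℓ ^ 2 := by
  have : NeZero (2 * N) := ⟨by omega⟩
  obtain ⟨F, hF⟩ := exists_lift hp
  have hc' : ∀ k : ZMod (2 * N), F (k + 1) - 2 * F k + F (k - 1) = -c * F k := by
    intro k
    obtain ⟨ℓ, rfl⟩ := ZMod.intCast_surjective k
    simpa [hF] using hc ℓ
  simp only [hF, Int.cast_sub, Int.cast_one]
  rw [sum_rng_cast (fun k => F k ^ 2), sum_rng_cast (fun k => (F k - F (k - 1)) ^ 2)]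
  -- shift invariance of the sums over `ℤ/2Nℤ`
  have s1 : ∑ k, F k * F (k - 1) = ∑ k, F (k + 1) * F k := by
    rw [← Equiv.sum_comp (Equiv.addRight (1 : ZMod (2 * N)))]
    simp
  have s2 : ∑ k, F (k - 1) ^ 2 = ∑ k, F k ^ 2 :=
    (Equiv.subRight (1 : ZMod (2 * N))).sum_comp (fun k => F k ^ 2)
  have e1 : ∑ k, (F k - F (k - 1)) ^ 2
      = ∑ k, F k ^ 2 - 2 * ∑ k, F k * F (k - 1) + ∑ k, F (k - 1) ^ 2 := by
    rw [Finset.mul_sum, ← Finset.sum_sub_distrib, ← Finset.sum_add_distrib]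
    exact Finset.sum_congr rfl fun k _ => by ring
  have e2 : c * ∑ k, F k ^ 2
      = 2 * ∑ k, F k ^ 2 - ∑ k, F (k + 1) * F k - ∑ k, F k * F (k - 1) := by
    rw [Finset.mul_sum, Finset.mul_sum, ← Finset.sum_sub_distrib, ← Finset.sum_sub_distrib]
    exact Finset.sum_congr rfl fun k _ => by linear_combination F k * hc' k
  linarith

lemma Periodic2N.dv {N : ℕ} {v : ℤ → ℝ} (hp : Periodic2N N v) : Periodic2N N (Dv N v) := by
  intro ℓ
  have h := hp (ℓ - 1)
  rw [sub_add_eq_add_sub] at h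
  simp only [Dv, hp ℓ, h]

lemma memU_dv {N : ℕ} (hN : 0 < N) {v : ℤ → ℝ} (hp : Periodic2N N v) : memU N (Dv N v) := by
  refine ⟨hp.dv, ?_⟩
  have : NeZero (2 * N) := ⟨by omega⟩
  obtain ⟨F, hF⟩ := exists_lift hp
  have s : ∑ k, F (k - 1) = ∑ k, F k := (Equiv.subRight (1 : ZMod (2 * N))).sum_comp F
  simp only [Dv, hF, Int.cast_sub, Int.cast_one]
  rw [sum_rng_cast (fun k => (F k - F (k - 1)) / eps N), ← Finset.sum_div,
    Finset.sum_sub_distrib, s, sub_self, zero_div]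

lemma eps_pos {N : ℕ} (hN : 0 < N) : 0 < eps N := by
  unfold eps
  positivity

lemma nsq_dv (N : ℕ) (v : ℤ → ℝ) :
    nsq N (Dv N v) = eps N * (∑ ℓ ∈ rng N, (v ℓ - v (ℓ - 1)) ^ 2) / eps N ^ 2 := by
  simp only [nsq, Dv, div_pow, ← Finset.sum_div]
  ring

lemma sin_eps_pos {N : ℕ} (hN : 0 < N) : 0 < Real.sin (π * eps N / 2) := by
  rw [sin_arg]
  exact sin_pos_aux (by omega)

lemma nsq_dv_ge {N : ℕ} (hN : 0 < N) {v : ℤ → ℝ} (hv : memU N v) :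
    (2 * Real.sin (π * eps N / 2) / eps N) ^ 2 * nsq N v ≤ nsq N (Dv N v) := by
  have he := eps_pos hN
  rw [nsq_dv, nsq, div_pow, div_mul_eq_mul_div]
  refine div_le_div_of_nonneg_right ?_ (sq_nonneg _)
  linarith [mul_le_mul_of_nonneg_left (wirtinger hN hv) he.le]

lemma nsq_pos {N : ℕ} (hN : 0 < N) {u : ℤ → ℝ} (hp : Periodic2N N u) (hu : u ≠ 0) :
    0 < nsq N u := by
  have : NeZero (2 * N) := ⟨by omega⟩
  obtain ⟨F, hF⟩ := exists_lift hp
  obtain ⟨ℓ, hℓ⟩ := Function.ne_iff.1 hu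
  rw [hF, Pi.zero_apply] at hℓ
  simp only [nsq, hF]
  rw [sum_rng_cast (fun k => F k ^ 2)]
  refine mul_pos (eps_pos hN) (Finset.sum_pos' (fun k _ => sq_nonneg _) 
    ⟨(ℓ : ZMod (2 * N)), Finset.mem_univ _, ?_⟩)
  exact sq_pos_of_ne_zero hℓ

lemma const_pos {N : ℕ} (hN : 0 < N) : 0 < 2 * Real.sin (π * eps N / 2) / eps N := by
  have := eps_pos hN
  have := sin_eps_pos hN
  positivity

lemma nrm_dv_pos {N : ℕ} (hN : 0 < N) {u : ℤ → ℝ} (hu : memU N u) (h0 : u ≠ 0) :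
    0 < nrm N (Dv N u) := by
  have h1 := nsq_pos hN hu.1 h0
  have h2 := const_pos hN
  exact Real.sqrt_pos.2 (lt_of_lt_of_le (by positivity) (nsq_dv_ge hN hu))

lemma cos_eigen (t x : ℝ) :
    Real.cos (x + t) - 2 * Real.cos x + Real.cos (x - t)
      = -(2 * Real.sin (t / 2)) ^ 2 * Real.cos x := by
  have h : Real.cos t = 1 - 2 * Real.sin (t / 2) ^ 2 := by
    have h2 := Real.cos_two_mul (t / 2)
    rw [mul_div_cancel₀ t (two_ne_zero)] at h2
    linear_combination h2 + 2 * Real.sin_sq_add_cos_sq (t / 2)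
  rw [Real.cos_add, Real.cos_sub, h]
  ring

/-- `cos (πℓ/N)`, the minimizer of the quotient. -/
def cosSeq (N : ℕ) : ℤ → ℝ := fun ℓ => Real.cos (π * eps N * ℓ)

lemma cosSeq_periodic {N : ℕ} (hN : 0 < N) : Periodic2N N (cosSeq N) := by
  intro ℓ
  have hN' : (N : ℝ) ≠ 0 := by positivity
  have : π * eps N * ((ℓ + 2 * (N : ℤ) : ℤ) : ℝ) = π * eps N * ℓ + 2 * π := by
    unfold eps
    push_cast
    field_simp
  simp only [cosSeq, this, Real.cos_add_two_pi]

lemma cosSeq_eigen (N : ℕ) (ℓ : ℤ) :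
    cosSeq N (ℓ + 1) - 2 * cosSeq N ℓ + cosSeq N (ℓ - 1)
      = -(2 * Real.sin (π * eps N / 2)) ^ 2 * cosSeq N ℓ := by
  have h := cos_eigen (π * eps N) (π * eps N * ℓ)
  simp only [cosSeq]
  push_cast
  rw [mul_add, mul_sub, mul_one]
  exact h

lemma cosSeq_memU {N : ℕ} (hN : 0 < N) : memU N (cosSeq N) := by
  refine ⟨cosSeq_periodic hN, ?_⟩
  have : NeZero (2 * N) := ⟨by omega⟩
  obtain ⟨F, hF⟩ := exists_lift (cosSeq_periodic hN)
  have hs := sin_eps_pos hN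
  -- the second difference has zero sum, so its eigenvectors do too
  have h := Finset.sum_congr (rfl : rng N = rng N) fun ℓ _ => cosSeq_eigen N ℓ
  simp only [hF, Int.cast_sub, Int.cast_add, Int.cast_one] at h ⊢
  rw [sum_rng_cast (fun k => F (k + 1) - 2 * F k + F (k - 1)), ← Finset.mul_sum,
    Finset.sum_add_distrib, Finset.sum_sub_distrib, ← Finset.mul_sum] at h
  have s1 : ∑ k, F (k - 1) = ∑ k, F k := (Equiv.subRight (1 : ZMod (2 * N))).sum_comp F
  have s2 : ∑ k, F (k + 1) = ∑ k, F k := Equiv.sum_comp (Equiv.addRight (1 : ZMod (2 * N))) F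
  rw [s1, s2] at h
  have h' : -(2 * Real.sin (π * eps N / 2)) ^ 2 * ∑ ℓ ∈ rng N, F (ℓ : ZMod (2 * N)) = 0 := by
    rw [← h]
    ring
  exact (mul_eq_zero.1 h').resolve_left (neg_ne_zero.2 (by positivity))

lemma cosSeq_ne_zero (N : ℕ) : cosSeq N ≠ 0 := by
  intro h
  have := congrFun h 0
  simp [cosSeq] at this

lemma nsq_dv_dv_cosSeq {N : ℕ} (hN : 0 < N) :
    nsq N (Dv N (Dv N (cosSeq N)))
      = (2 * Real.sin (π * eps N / 2) / eps N) ^ 2 * nsq N (Dv N (cosSeq N)) := by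
  have hc : ∀ ℓ, Dv N (cosSeq N) (ℓ + 1) - 2 * Dv N (cosSeq N) ℓ + Dv N (cosSeq N) (ℓ - 1)
      = -(2 * Real.sin (π * eps N / 2)) ^ 2 * Dv N (cosSeq N) ℓ := by
    intro ℓ
    have h1 := cosSeq_eigen N ℓ
    have h2 := cosSeq_eigen N (ℓ - 1)
    rw [sub_add_cancel] at h2
    simp only [Dv, add_sub_cancel_right]
    linear_combination (h1 - h2) / eps N
  rw [nsq_dv N (Dv N (cosSeq N)), sum_sq_diff_of_eigen hN (cosSeq_periodic hN).dv hc, nsq]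
  ring

/-- the infimum of ‖D²u‖/‖Du‖ over nonzero u ∈ 𝒰 equals 2 sin(πε/2)/ε. -/
theorem inf_second_over_first_derivative (N : ℕ) (hN : 0 < N) :
    sInf {x : ℝ | ∃ u : ℤ → ℝ, memU N u ∧ u ≠ 0 ∧
        x = nrm N (Dv N (Dv N u)) / nrm N (Dv N u)}
      = 2 * Real.sin (Real.pi * eps N / 2) / eps N := by
  have hc := const_pos hN
  refine IsLeast.csInf_eq ⟨⟨cosSeq N, cosSeq_memU hN, cosSeq_ne_zero N, ?_⟩, ?_⟩
  · rw [eq_div_iff (nrm_dv_pos hN (cosSeq_memU hN) (cosSeq_ne_zero N)).ne', nrm, nrm,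
      nsq_dv_dv_cosSeq hN, Real.sqrt_mul (sq_nonneg _), Real.sqrt_sq hc.le]
  · rintro x ⟨u, hu, h0, rfl⟩
    rw [le_div_iff₀ (nrm_dv_pos hN hu h0), nrm, nrm]
    calc _ = √((2 * Real.sin (π * eps N / 2) / eps N) ^ 2 * nsq N (Dv N u)) := by
          rw [Real.sqrt_mul (sq_nonneg _), Real.sqrt_sq hc.le]
      _ ≤ _ := Real.sqrt_le_sqrt (nsq_dv_ge hN (memU_dv hN hu.1))
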